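/- (Theorem 3, case 1, concrete form.) Let G=(V,E) be the complete directed graph on n nodes (with edge (u,v) for every ordered pair of distinct nodes u ≠ v), let Θ = ×_{e∈E}[0,1] be the fully uncertain parameter space, and let 1 ≤ k < n. Then every seed set S ⊆ V with |S| = k satisfies g(Θ,S) ≤ k/(n−k). In particular max_{|S|=k} g(Θ,S) ≤ k/(n−k). -/

import Mathlib

/-!
The infimum is bounded by its value at a single degenerate parameter vector: `θ = 1` on the edges
with both endpoints outside `S`, and `θ = 0` elsewhere. A `0/1`-valued `θ` makes the live-edge graph
deterministic (`spread_indicator`). In that graph no edge leaves `S`, so `S` influences exactly its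
own `k` nodes, whereas any `k`-set containing a node outside `S` reaches the whole clique on the
`n - k` nodes of `Sᶜ`.
-/

noncomputable def reachSet {V : Type*} [Fintype V] [DecidableEq V]
    (L : Finset (V × V)) (S : Finset V) : Finset V :=
  @Finset.filter V
    (fun v => ∃ s ∈ S, Relation.ReflTransGen (fun a b : V => (a, b) ∈ L) s v)
    (fun _ => Classical.propDecidable _) Finset.univ

noncomputable def liveProb {V : Type*} [DecidableEq V]
    (E : Finset (V × V)) (θ : V × V → ℝ) (L : Finset (V × V)) : ℝ :=
  (∏ e ∈ L, θ e) * ∏ e ∈ E \ L, (1 - θ e)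

noncomputable def spread {V : Type*} [Fintype V] [DecidableEq V]
    (E : Finset (V × V)) (θ : V × V → ℝ) (S : Finset V) : ℝ :=
  ∑ L ∈ E.powerset, liveProb E θ L * (reachSet L S).card

noncomputable def OPT {V : Type*} [Fintype V] [DecidableEq V]
    (E : Finset (V × V)) (θ : V × V → ℝ) (k : ℕ) : ℝ :=
  sSup {x : ℝ | ∃ T : Finset V, T.card = k ∧ x = spread E θ T}

noncomputable def robustRatio {V : Type*} [Fintype V] [DecidableEq V]
    (E : Finset (V × V)) (l r : V × V → ℝ) (k : ℕ) (S : Finset V) : ℝ :=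
  sInf {x : ℝ | ∃ θ : V × V → ℝ, (∀ e ∈ E, l e ≤ θ e ∧ θ e ≤ r e) ∧
    x = spread E θ S / OPT E θ k}

/-- Under the indicator vector of `A ⊆ E` the live-edge graph is almost surely `A`. -/
lemma liveProb_indicator {V : Type*} [DecidableEq V] {E A L : Finset (V × V)}
    (hA : A ⊆ E) :
    liveProb E (fun e => if e ∈ A then 1 else 0) L = if L = A then 1 else 0 := by
  unfold liveProb
  split_ifs with h
  · subst h
    rw [Finset.prod_eq_one, Finset.prod_eq_one, mul_one]
    · intro e he
      simp [(Finset.mem_sdiff.1 he).2]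
    · intro e he
      simp [he]
  · by_cases hLA : L ⊆ A
    · have : ¬ A ⊆ L := fun h' => h (Finset.Subset.antisymm hLA h')
      obtain ⟨e, heA, heL⟩ := Finset.not_subset.1 this
      rw [Finset.prod_eq_zero (s := E \ L) (i := e)
        (Finset.mem_sdiff.2 ⟨hA heA, heL⟩) (by simp [heA]), mul_zero]
    · obtain ⟨e, heL, heA⟩ := Finset.not_subset.1 hLA
      rw [Finset.prod_eq_zero (s := L) (i := e) heL (by simp [heA]), zero_mul]

lemma spread_indicator {V : Type*} [Fintype V] [DecidableEq V] {E A : Finset (V × V)}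
    (hA : A ⊆ E) (S : Finset V) :
    spread E (fun e => if e ∈ A then 1 else 0) S = (reachSet A S).card := by
  unfold spread
  rw [Finset.sum_eq_single_of_mem A (Finset.mem_powerset.2 hA)]
  · rw [liveProb_indicator hA, if_pos rfl, one_mul]
  · intro L _ hne
    rw [liveProb_indicator hA, if_neg hne, zero_mul]

lemma spread_nonneg {V : Type*} [Fintype V] [DecidableEq V] {E : Finset (V × V)}
    {θ : V × V → ℝ} (hθ : ∀ e ∈ E, 0 ≤ θ e ∧ θ e ≤ 1) (S : Finset V) :
    0 ≤ spread E θ S := by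
  unfold spread liveProb
  refine Finset.sum_nonneg fun L hL => mul_nonneg (mul_nonneg ?_ ?_) (Nat.cast_nonneg _)
  · exact Finset.prod_nonneg fun e he => (hθ e (Finset.mem_powerset.1 hL he)).1
  · exact Finset.prod_nonneg fun e he => sub_nonneg.2 (hθ e (Finset.mem_sdiff.1 he).1).2

lemma spread_le_OPT {V : Type*} [Fintype V] [DecidableEq V] (E : Finset (V × V))
    (θ : V × V → ℝ) {k : ℕ} {T : Finset V} (hT : T.card = k) :
    spread E θ T ≤ OPT E θ k := by
  refine le_csSup ((Set.finite_range fun T : Finset V => spread E θ T).subset ?_).bddAbove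
    ⟨T, hT, rfl⟩
  rintro _ ⟨T, -, rfl⟩
  exact ⟨T, rfl⟩

lemma robustRatio_le {V : Type*} [Fintype V] [DecidableEq V] {E : Finset (V × V)}
    {θ : V × V → ℝ} (hθ : ∀ e ∈ E, 0 ≤ θ e ∧ θ e ≤ 1) (k : ℕ) (S : Finset V) :
    robustRatio E (fun _ => 0) (fun _ => 1) k S ≤ spread E θ S / OPT E θ k := by
  refine csInf_le ⟨0, ?_⟩ ⟨θ, hθ, rfl⟩
  rintro _ ⟨θ', hθ', rfl⟩
  refine div_nonneg (spread_nonneg hθ' S) (Real.sSup_nonneg ?_)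
  rintro _ ⟨T, -, rfl⟩
  exact spread_nonneg hθ' T

lemma mem_reachSet {V : Type*} [Fintype V] [DecidableEq V] {L : Finset (V × V)} {S : Finset V}
    {v : V} : v ∈ reachSet L S ↔
      ∃ s ∈ S, Relation.ReflTransGen (fun a b : V => (a, b) ∈ L) s v := by
  simp [reachSet]

/-- Theorem 3, case 1, concrete form: on the complete directed graph with
fully uncertain parameter space `×_{e∈E}[0,1]`, every size-`k` seed set has robust ratio
at most `k/(n−k)`. -/
theorem robust_ratio_complete_graph {V : Type*} [Fintype V] [DecidableEq V]
    (n k : ℕ) (hn : n = Fintype.card V) (hk1 : 1 ≤ k) (hkn : k < n)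
    (E : Finset (V × V)) (hE : E = Finset.univ.filter (fun e : V × V => e.1 ≠ e.2))
    (S : Finset V) (hS : S.card = k) :
    robustRatio E (fun _ => 0) (fun _ => 1) k S ≤ (k : ℝ) / ((n : ℝ) - k) := by
  subst hE
  -- `A` is the complete digraph on the complement of `S`.
  set A : Finset (V × V) :=
    Finset.univ.filter fun e : V × V => e.1 ≠ e.2 ∧ e.1 ∉ S ∧ e.2 ∉ S with hAdef
  have memA : ∀ a b : V, (a, b) ∈ A ↔ a ≠ b ∧ a ∉ S ∧ b ∉ S := fun a b => by simp [hAdef]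
  have hA : A ⊆ Finset.univ.filter (fun e : V × V => e.1 ≠ e.2) := by
    rintro ⟨a, b⟩ h
    simpa using ((memA a b).1 h).1
  have hreachS : reachSet A S = S := by
    ext v
    rw [mem_reachSet]
    refine ⟨?_, fun hv => ⟨v, hv, .refl⟩⟩
    rintro ⟨s, hs, h⟩
    rcases h.cases_head with rfl | ⟨c, hc, -⟩
    · exact hs
    · exact absurd hs ((memA s c).1 hc).2.1
  have hcompl : Sᶜ.card = n - k := by rw [Finset.card_compl, hS, hn]
  obtain ⟨u, hu⟩ : Sᶜ.Nonempty := Finset.card_pos.1 (by omega)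
  obtain ⟨T, huT, hT⟩ := Finset.exists_superset_card_eq (s := {u}) (n := k)
    (by simpa using hk1) (by omega)
  rw [Finset.singleton_subset_iff] at huT
  have hreachT : Sᶜ ⊆ reachSet A T := by
    intro v hv
    rw [mem_reachSet]
    refine ⟨u, huT, ?_⟩
    by_cases huv : u = v
    · rw [huv]
    · exact .single ((memA u v).2 ⟨huv, Finset.mem_compl.1 hu, Finset.mem_compl.1 hv⟩)
  have hle : (n : ℝ) - k ≤ (reachSet A T).card := by
    rw [← Nat.cast_sub hkn.le, ← hcompl]
    exact_mod_cast Finset.card_le_card hreachT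
  have hopt := spread_le_OPT (Finset.univ.filter fun e : V × V => e.1 ≠ e.2)
    (fun e => if e ∈ A then 1 else 0) hT
  rw [spread_indicator hA] at hopt
  have hpos : (0 : ℝ) < (n : ℝ) - k := sub_pos.2 (Nat.cast_lt.2 hkn)
  refine (robustRatio_le (θ := fun e => if e ∈ A then 1 else 0) ?_ k S).trans ?_
  · intro e _
    split_ifs <;> norm_num
  · rw [spread_indicator hA, hreachS, hS]
    exact div_le_div_of_nonneg_left (Nat.cast_nonneg k) hpos (hle.trans hopt)
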